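/- arXiv:2201.01844 — 2 statements merged into one kernel-verified Lean document; each statement's English description precedes it below -/
import Mathlib

section
/- There is a universal constant C > 0 such that the following holds. Let D₁ and D₂ be two disjoint finite sets of distinct disks in the plane with |D₁| + |D₂| = n, and let k ≥ 1 be an integer. Then the number of pairs (d₁, d₂) with d₁ ∈ D₁, d₂ ∈ D₂ for which there exists a point p ∈ d₁ ∩ d₂ with depth_{D₁ ∪ D₂}(p) ≤ k is at most C·n·k. -/
open Metric Set
open scoped Classical

noncomputable section

abbrev Plane : Type := EuclideanSpace ℝ (Fin 2)

/-- A disk is a closed ball of positive radius in the plane. -/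
def IsDisk (d : Set Plane) : Prop :=
  ∃ (c : Plane) (r : ℝ), 0 < r ∧ d = Metric.closedBall c r

/-- The depth of a point `p` in a finite family `D` of disks:
the number of disks of `D` containing `p`. -/
def diskDepth (D : Finset (Set Plane)) (p : Plane) : ℕ :=
  {d : Set Plane | d ∈ D ∧ p ∈ d}.ncard

/-- General position: no two boundary circles are tangent (meet in exactly one
point), and no three boundary circles pass through a common point.  (All disks
are automatically distinct, since `D` is a finite set of point sets.) -/
def GeneralPosition (D : Finset (Set Plane)) : Prop :=
  (∀ d₁ ∈ D, ∀ d₂ ∈ D, d₁ ≠ d₂ → ¬ ∃ p : Plane, frontier d₁ ∩ frontier d₂ = {p}) ∧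
  (∀ d₁ ∈ D, ∀ d₂ ∈ D, ∀ d₃ ∈ D, d₁ ≠ d₂ → d₁ ≠ d₃ → d₂ ≠ d₃ →
      frontier d₁ ∩ frontier d₂ ∩ frontier d₃ = ∅)

/-- The intersection graph of a finite family of disks: two distinct disks are
adjacent iff they intersect. -/
def IG (D : Finset (Set Plane)) : SimpleGraph {d // d ∈ D} :=
  SimpleGraph.fromRel (fun d₁ d₂ => (d₁.1 ∩ d₂.1).Nonempty)

/-- The ε-safe zone for disks `D` and attack set `B`: the set of points `p`
with `depth_{D∖B}(p) ≥ ε·depth_D(p)`. -/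
def SafeZone (ε : ℝ) (D B : Finset (Set Plane)) : Set Plane :=
  {p | ε * (diskDepth D p : ℝ) ≤
        (({d : Set Plane | d ∈ D ∧ d ∉ B ∧ p ∈ d}).ncard : ℝ)}

/-- Two points are ε-safely connected if they lie in the same topological
connected component of the ε-safe zone. -/
def SafelyConnected (ε : ℝ) (D B : Finset (Set Plane)) (p q : Plane) : Prop :=
  q ∈ connectedComponentIn (SafeZone ε D B) p

lemma cs_card {α : Type} [Fintype α] [DecidableEq α] (k m : ℕ) (hk : 1 ≤ k) (hm : m = 2 * k) (i j : α) (hij : i ≠ j)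
    (K : Finset α) (hK : K.card ≤ k) (hi : i ∉ K) (hj : j ∉ K) (c : Fin m) :
    (m : ℝ) ^ (Fintype.card α) ≤ 2 * m ^ 2 *
      ((Fintype.piFinset (fun x : α => if x = i ∨ x = j then ({c} : Finset (Fin m))
        else if x ∈ K then Finset.univ.erase c else Finset.univ)).card : ℝ) := by
  have hm0 : (0 : ℝ) < m := by
    have : 0 < m := by omega
    exact_mod_cast this
  rw [Fintype.card_piFinset]
  push_cast
  have h1 : ∀ x : α, (((if x = i ∨ x = j then ({c} : Finset (Fin m))
        else if x ∈ K then Finset.univ.erase c else Finset.univ).card : ℕ) : ℝ)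
      = m * ((if x ∈ ({i, j} : Finset α) then (1 / m : ℝ) else 1) *
         (if x ∈ K then (1 - 1 / m : ℝ) else 1)) := by
    intro x
    by_cases hx : x = i ∨ x = j
    · have hxK : x ∉ K := by rcases hx with rfl | rfl <;> assumption
      simp [hx, hxK, hm0.ne']
    · by_cases hxK : x ∈ K
      · have hm1 : 1 ≤ m := by omega
        simp [hx, hxK, Finset.card_erase_of_mem, Nat.cast_sub hm1]
        field_simp
      · simp [hx, hxK]
  rw [Finset.prod_congr rfl (fun x _ => h1 x)]
  rw [Finset.prod_mul_distrib, Finset.prod_mul_distrib, Finset.prod_ite_mem, Finset.prod_ite_mem]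
  simp only [Finset.univ_inter, Finset.prod_const, Finset.card_pair hij, Finset.card_univ]
  have hb : (1 / 2 : ℝ) ≤ (1 - 1 / m : ℝ) ^ K.card := by
    have hm1 : (1 / m : ℝ) ≤ 1 := by
      rw [div_le_one hm0]
      have : 1 ≤ m := by omega
      exact_mod_cast this
    have h2 := one_add_mul_le_pow (a := (-(1 / m) : ℝ)) (by linarith) K.card
    have h3 : (K.card : ℝ) * (1 / m) ≤ 1 / 2 := by
      have : (K.card : ℝ) ≤ k := by exact_mod_cast hK
      have h4 : (m : ℝ) = 2 * k := by rw [hm]; push_cast; ring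
      rw [mul_one_div, div_le_iff₀ hm0]
      linarith
    have h5 : (1 + -(1 / m) : ℝ) = 1 - 1 / m := by ring
    rw [h5] at h2
    linarith
  have : 2 * (m : ℝ) ^ 2 * (m ^ Fintype.card α * ((1 / m) ^ 2 * (1 - 1 / m : ℝ) ^ K.card))
     = m ^ Fintype.card α * (2 * (1 - 1 / m : ℝ) ^ K.card) := by
    field_simp
  rw [this]
  have hp : (0 : ℝ) < (m : ℝ) ^ Fintype.card α := by positivity
  nlinarith

lemma cs_lemma {ι : Type} (D : Finset ι) (E : Finset ι → Finset (ι × ι)) (C : ℕ)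
    (hE : ∀ S ⊆ D, (E S).card ≤ C * S.card) (k : ℕ) (hk : 1 ≤ k) (N : Finset (ι × ι))
    (hN : ∀ q ∈ N, q.1 ∈ D ∧ q.2 ∈ D ∧ q.1 ≠ q.2 ∧ ∃ K : Finset ι, K.card ≤ k ∧ q.1 ∉ K ∧ q.2 ∉ K ∧
      ∀ S ⊆ D, q.1 ∈ S → q.2 ∈ S → Disjoint S K → q ∈ E S) :
    N.card ≤ 4 * C * k * D.card := by
  obtain ⟨m, hm⟩ : ∃ m, m = 2 * k := ⟨_, rfl⟩
  have hm0 : (0 : ℝ) < m := by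
    have : 0 < m := by omega
    exact_mod_cast this
  let cl : ({x // x ∈ D} → Fin m) → Fin m → Finset ι := fun f c =>
    (Finset.univ.filter (fun x => f x = c)).map (Function.Embedding.subtype _)
  have hcl : ∀ f c, cl f c ⊆ D := by
    intro f c x hx
    simp only [cl, Finset.mem_map] at hx
    obtain ⟨y, _, rfl⟩ := hx
    exact y.2
  have hsum : ∀ f, ∑ c, (cl f c).card = D.card := by
    intro f
    simp only [cl, Finset.card_map]
    rw [← Finset.card_eq_sum_card_fiberwise (fun _ _ => Finset.mem_coe.2 (Finset.mem_univ _))]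
    simp
  have hup : ∑ f : ({x // x ∈ D} → Fin m), ∑ c, ((E (cl f c)).card : ℝ)
      ≤ (m : ℝ) ^ D.card * (C * D.card) := by
    have h1 : ∀ f : ({x // x ∈ D} → Fin m), ∑ c, ((E (cl f c)).card : ℝ) ≤ C * D.card := by
      intro f
      have : ∑ c, (E (cl f c)).card ≤ C * D.card := by
        rw [← hsum f, Finset.mul_sum]
        exact Finset.sum_le_sum (fun c _ => hE _ (hcl f c))
      exact_mod_cast this
    calc _ ≤ ∑ f : ({x // x ∈ D} → Fin m), (C * D.card : ℝ) := Finset.sum_le_sum (fun f _ => h1 f)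
      _ = _ := by simp
  have hlow : ∑ q ∈ N, ∑ c : Fin m, (((Finset.univ : Finset ({x // x ∈ D} → Fin m)).filter
      (fun f => q ∈ E (cl f c))).card : ℝ) ≤
      ∑ f : ({x // x ∈ D} → Fin m), ∑ c, ((E (cl f c)).card : ℝ) := by
    have h1 : ∀ f c, ∑ q ∈ N, (if q ∈ E (cl f c) then (1 : ℝ) else 0) ≤ ((E (cl f c)).card : ℝ) := by
      intro f c
      rw [Finset.sum_boole]
      exact_mod_cast Finset.card_le_card (fun q hq => (Finset.mem_filter.1 hq).2)
    calc _ = ∑ q ∈ N, ∑ c : Fin m, ∑ f : ({x // x ∈ D} → Fin m),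
          (if q ∈ E (cl f c) then (1 : ℝ) else 0) := by
          simp only [Finset.sum_boole]
      _ = ∑ f : ({x // x ∈ D} → Fin m), ∑ c : Fin m, ∑ q ∈ N,
          (if q ∈ E (cl f c) then (1 : ℝ) else 0) := by
          rw [Finset.sum_comm]
          rw [Finset.sum_congr rfl (fun c _ => Finset.sum_comm)]
          rw [Finset.sum_comm]
      _ ≤ _ := Finset.sum_le_sum (fun f _ => Finset.sum_le_sum (fun c _ => h1 f c))
  have hq : ∀ q ∈ N, ∀ c : Fin m, (m : ℝ) ^ D.card ≤ 2 * m ^ 2 *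
      (((Finset.univ : Finset ({x // x ∈ D} → Fin m)).filter
      (fun f => q ∈ E (cl f c))).card : ℝ) := by
    intro q hqN c
    obtain ⟨h1, h2, h12, K, hK, hK1, hK2, hKS⟩ := hN q hqN
    have hmain := cs_card (α := {x // x ∈ D}) k m hk hm ⟨q.1, h1⟩ ⟨q.2, h2⟩
      (by simpa using h12) (K.subtype (fun x => x ∈ D))
      (by
        rw [Finset.card_subtype]
        exact (Finset.card_filter_le _ _).trans hK)
      (by simpa using hK1) (by simpa using hK2) c
    rw [Fintype.card_coe] at hmain
    refine hmain.trans ?_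
    gcongr
    intro f hf
    rw [Fintype.mem_piFinset] at hf
    simp only [Finset.mem_filter, Finset.mem_univ, true_and]
    apply hKS _ (hcl f c)
    · have := hf ⟨q.1, h1⟩
      simp at this
      simp [cl, h1, this]
    · have := hf ⟨q.2, h2⟩
      simp at this
      simp [cl, h2, this]
    · rw [Finset.disjoint_left]
      intro x hx hxK
      simp only [cl, Finset.mem_map, Finset.mem_filter] at hx
      obtain ⟨y, ⟨_, hy⟩, rfl⟩ := hx
      have := hf y
      have e1 : y ≠ ⟨q.1, h1⟩ := by rintro rfl; exact hK1 hxK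
      have e2 : y ≠ ⟨q.2, h2⟩ := by rintro rfl; exact hK2 hxK
      have e3 : (y : ι) ∈ K := hxK
      simp [e1, e2, e3, hy] at this
  have hfin : (N.card : ℝ) * (m * m ^ D.card) ≤ 2 * m ^ 2 * ((m : ℝ) ^ D.card * (C * D.card)) := by
    calc (N.card : ℝ) * (m * m ^ D.card) = ∑ q ∈ N, ∑ c : Fin m, (m : ℝ) ^ D.card := by
          simp
      _ ≤ ∑ q ∈ N, ∑ c : Fin m, 2 * m ^ 2 *
      (((Finset.univ : Finset ({x // x ∈ D} → Fin m)).filter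
      (fun f => q ∈ E (cl f c))).card : ℝ) :=
          Finset.sum_le_sum (fun q hqN => Finset.sum_le_sum (fun c _ => hq q hqN c))
      _ = 2 * m ^ 2 * ∑ q ∈ N, ∑ c : Fin m,
      (((Finset.univ : Finset ({x // x ∈ D} → Fin m)).filter
      (fun f => q ∈ E (cl f c))).card : ℝ) := by
          simp only [Finset.mul_sum]
      _ ≤ _ := by
          have := hlow.trans hup
          gcongr
  have hpos : (0 : ℝ) < m * m ^ D.card := by positivity
  have h4 : (m : ℝ) = 2 * k := by rw [hm]; push_cast; ring
  have h5 : (N.card : ℝ) ≤ 4 * C * k * D.card := by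
    have h6 : 2 * m ^ 2 * ((m : ℝ) ^ D.card * (C * D.card)) =
        (4 * C * k * D.card) * (m * m ^ D.card) := by
      have : (4 * C * k * D.card : ℝ) = 2 * m * C * D.card := by rw [h4]; ring
      rw [this]; ring
    rw [h6] at hfin
    exact le_of_mul_le_mul_right hfin hpos
  exact_mod_cast h5

/-- consecutive bars -/
def Consec {ι : Type} (S : Finset ι) (b : ι → ℝ) (A : ι → ℝ → Prop) (t : ℝ) (i j : ι) : Prop :=
  A i t ∧ A j t ∧ ∀ l ∈ S, A l t → ¬ (b i < b l ∧ b l < b j)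

lemma bar_lemma {ι : Type} (S : Finset ι) (b : ι → ℝ) (hb : Set.InjOn b S) (A : ι → ℝ → Prop)
    (hA : ∀ i ∈ S, ∀ t₁ t₂ t₃, t₁ ≤ t₂ → t₂ ≤ t₃ → A i t₁ → A i t₃ → A i t₂)
    (T : Finset ℝ) (N : Finset (ι × ι))
    (hN : ∀ q ∈ N, q.1 ∈ S ∧ q.2 ∈ S ∧ b q.1 < b q.2 ∧ ∃ t ∈ T, Consec S b A t q.1 q.2) :
    N.card ≤ 3 * S.card := by
  -- start relation
  let St : ι → ℝ → Prop := fun i t => t ∈ T ∧ A i t ∧ ∀ u ∈ T, A i u → t ≤ u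
  let En : ι → ℝ → Prop := fun l t => t ∈ T ∧ ∃ v ∈ T, v < t ∧ A l v ∧ ¬ A l t ∧ ∀ u ∈ T, u < t → u ≤ v
  have hSt : ∀ i t t', St i t → St i t' → t = t' := by
    intro i t t' h h'
    exact le_antisymm (h.2.2 _ h'.1 h'.2.1) (h'.2.2 _ h.1 h.2.1)
  have hEn : ∀ l ∈ S, ∀ t t', En l t → En l t' → t = t' := by
    have key : ∀ l ∈ S, ∀ t t', En l t → En l t' → ¬ t < t' := by
      rintro l hl t t' ⟨ht, v, hv, hvt, hlv, hnl, hvu⟩ ⟨ht', v', hv', hvt', hlv', hnl', hvu'⟩ hlt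
      exact hnl (hA l hl v t v' hvt.le (hvu' t ht hlt) hlv hlv')
    intro l hl t t' h h'
    exact le_antisymm (not_lt.1 (key l hl t' t h' h)) (not_lt.1 (key l hl t t' h h'))
  let R : ι × ι → ι × Fin 3 → Prop := fun q z =>
    ∃ t, Consec S b A t q.1 q.2 ∧
      ((z.2 = 0 ∧ z.1 = q.1 ∧ St z.1 t) ∨ (z.2 = 1 ∧ z.1 = q.2 ∧ St z.1 t) ∨
       (z.2 = 2 ∧ En z.1 t ∧ b q.1 < b z.1 ∧ b z.1 < b q.2))
  have hcard : (S ×ˢ (Finset.univ : Finset (Fin 3))).card = 3 * S.card := by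
    rw [Finset.card_product]; simp [mul_comm]
  rw [← hcard]
  apply Finset.card_le_card_of_forall_subsingleton R
  · rintro ⟨i, j⟩ hq
    obtain ⟨hi, hj, hij, t0, ht0, hc0⟩ := hN _ hq
    simp only at hi hj hij hc0
    let T' := T.filter (fun t => Consec S b A t i j)
    have hT' : T'.Nonempty := ⟨t0, by simp [T', ht0, hc0]⟩
    obtain ⟨t, htT', htmin⟩ := T'.exists_min_image id hT'
    simp only [T', Finset.mem_filter, id] at htT' htmin
    obtain ⟨ht, hc⟩ := htT'
    by_cases h1 : St i t
    · exact ⟨(i, 0), by simp [hi], t, hc, Or.inl ⟨rfl, rfl, h1⟩⟩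
    by_cases h2 : St j t
    · exact ⟨(j, 1), by simp [hj], t, hc, Or.inr (Or.inl ⟨rfl, rfl, h2⟩)⟩
    -- previous time
    have e1 : ∃ u ∈ T, A i u ∧ u < t := by
      by_contra hcon
      push Not at hcon
      exact h1 ⟨ht, hc.1, fun u hu hau => hcon u hu hau⟩
    have e2 : ∃ u ∈ T, A j u ∧ u < t := by
      by_contra hcon
      push Not at hcon
      exact h2 ⟨ht, hc.2.1, fun u hu hau => hcon u hu hau⟩
    obtain ⟨u1, hu1, hA1, hlt1⟩ := e1
    obtain ⟨u2, hu2, hA2, hlt2⟩ := e2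
    obtain ⟨v, hv, hvmax⟩ := (T.filter (fun u => u < t)).exists_max_image id
      ⟨u1, by simp [hu1, hlt1]⟩
    simp only [Finset.mem_filter, id] at hv hvmax
    have hiv : A i v := hA i hi u1 v t (hvmax u1 ⟨hu1, hlt1⟩) hv.2.le hA1 hc.1
    have hjv : A j v := hA j hj u2 v t (hvmax u2 ⟨hu2, hlt2⟩) hv.2.le hA2 hc.2.1
    have hnc : ¬ Consec S b A v i j := fun h => absurd (htmin v ⟨hv.1, h⟩) (not_le.2 hv.2)
    have : ∃ l ∈ S, A l v ∧ (b i < b l ∧ b l < b j) := by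
      by_contra hcon
      push Not at hcon
      exact hnc ⟨hiv, hjv, fun l hl hlv h => absurd h.2 (not_lt.2 (hcon l hl hlv h.1))⟩
    obtain ⟨l, hl, hlv, hbl⟩ := this
    refine ⟨(l, 2), by simp [hl], t, hc, Or.inr (Or.inr ⟨rfl, ⟨ht, v, hv.1, hv.2, hlv, ?_, ?_⟩, hbl.1, hbl.2⟩)⟩
    · intro h
      exact hc.2.2 l hl h hbl
    · intro u hu hut
      exact hvmax u ⟨hu, hut⟩
  · rintro ⟨l, z⟩ hlz
    have hlS : l ∈ S := by simpa using hlz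
    rintro ⟨i, j⟩ ⟨hq, t, hc, h⟩ ⟨i', j'⟩ ⟨hq', t', hc', h'⟩
    obtain ⟨hi, hj, hij, -⟩ := hN _ hq
    obtain ⟨hi', hj', hij', -⟩ := hN _ hq'
    simp only at hi hj hij hi' hj' hij' h h' hc hc'
    rcases h with ⟨hz, rfl, hs⟩ | ⟨hz, rfl, hs⟩ | ⟨hz, hs, hb1, hb2⟩ <;>
    rcases h' with ⟨hz', h', hs'⟩ | ⟨hz', h', hs'⟩ | ⟨hz', hs', hb1', hb2'⟩ <;>
    first
    | (exfalso; rw [hz] at hz'; revert hz'; decide)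
    | skip
    · subst h'
      have := hSt _ _ _ hs hs'
      subst this
      have : j = j' := by
        apply hb hj hj'
        apply le_antisymm
        · exact not_lt.1 (fun hlt => hc.2.2 j' hj' hc'.2.1 ⟨hij', hlt⟩)
        · exact not_lt.1 (fun hlt => hc'.2.2 j hj hc.2.1 ⟨hij, hlt⟩)
      rw [this]
    · subst h'
      have := hSt _ _ _ hs hs'
      subst this
      have : i = i' := by
        apply hb hi hi'
        apply le_antisymm
        · exact not_lt.1 (fun hlt => hc'.2.2 i hi hc.1 ⟨hlt, hij⟩)
        · exact not_lt.1 (fun hlt => hc.2.2 i' hi' hc'.1 ⟨hlt, hij'⟩)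
      rw [this]
    · have := hEn l hlS _ _ hs hs'
      subst this
      have e1 : j = j' := by
        apply hb hj hj'
        apply le_antisymm
        · exact not_lt.1 (fun hlt => hc.2.2 j' hj' hc'.2.1 ⟨hb1.trans hb2', hlt⟩)
        · exact not_lt.1 (fun hlt => hc'.2.2 j hj hc.2.1 ⟨hb1'.trans hb2, hlt⟩)
      have e2 : i = i' := by
        apply hb hi hi'
        apply le_antisymm
        · exact not_lt.1 (fun hlt => hc'.2.2 i hi hc.1 ⟨hlt, hb1.trans hb2'⟩)
        · exact not_lt.1 (fun hlt => hc.2.2 i' hi' hc'.1 ⟨hlt, hb1'.trans hb2⟩)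
      rw [e1, e2]

/-- affine function -/
def Fv {ι : Type} (a b c : ι → ℝ) (i : ι) (s y : ℝ) : ℝ := a i * s + b i * y + c i

def EZ {ι : Type} (a b c : ι → ℝ) (S : Finset ι) : Finset (ι × ι) :=
  (S ×ˢ S).filter (fun q => b q.1 < b q.2 ∧ ∃ s y, Fv a b c q.1 s y = Fv a b c q.2 s y ∧
    ∀ l ∈ S, l ≠ q.1 → l ≠ q.2 → Fv a b c l s y < Fv a b c q.1 s y)

def ES {ι : Type} (a b c : ι → ℝ) (S : Finset ι) : Finset (ι × ι) :=
  (S ×ˢ S).filter (fun q => q.1 ≠ q.2 ∧ ∃ s y, Fv a b c q.1 s y = Fv a b c q.2 s y ∧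
    ∀ l ∈ S, l ≠ q.1 → l ≠ q.2 → Fv a b c l s y < Fv a b c q.1 s y)

lemma EZ_card {ι : Type} (a b c : ι → ℝ) (S : Finset ι) (hb : Set.InjOn b S) :
    (EZ a b c S).card ≤ 3 * S.card := by
  have hw : ∀ q : ι × ι, ∃ s, q ∈ EZ a b c S → ∃ y, Fv a b c q.1 s y = Fv a b c q.2 s y ∧
      ∀ l ∈ S, l ≠ q.1 → l ≠ q.2 → Fv a b c l s y < Fv a b c q.1 s y := by
    intro q
    by_cases h : q ∈ EZ a b c S
    · obtain ⟨s, hs⟩ := (Finset.mem_filter.1 h).2.2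
      exact ⟨s, fun _ => hs⟩
    · exact ⟨0, fun h' => absurd h' h⟩
  choose w hw using hw
  apply bar_lemma S b hb (fun i s => ∃ y, ∀ l ∈ S, l ≠ i → Fv a b c l s y < Fv a b c i s y) ?_
    ((EZ a b c S).image w)
  · rintro ⟨i, j⟩ hq
    have hq' := hq
    simp only [EZ, Finset.mem_filter, Finset.mem_product] at hq'
    obtain ⟨⟨hi, hj⟩, hij, -⟩ := hq'
    obtain ⟨y, hy, hlt⟩ := hw _ hq
    simp only at hy hlt hi hj hij
    refine ⟨hi, hj, hij, w (i, j), Finset.mem_image_of_mem _ hq, ?_⟩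
    generalize w (i, j) = s at *
    have hcont : ∀ l, Continuous (fun y => Fv a b c l s y) := by
      intro l; unfold Fv; fun_prop
    have hev : ∀ m, (Fv a b c m s y = Fv a b c i s y) →
        ∀ᶠ y' in nhds y, ∀ l ∈ S, l ≠ i → l ≠ j → Fv a b c l s y' < Fv a b c m s y' := by
      intro m hm
      rw [Finset.eventually_all]
      intro l hl
      by_cases h : l ≠ i ∧ l ≠ j
      · have h1 : Fv a b c l s y < Fv a b c m s y := by rw [hm]; exact hlt l hl h.1 h.2
        filter_upwards [(hcont l).continuousAt.eventually_lt (hcont m).continuousAt h1] with y' hy' _ _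
        exact hy'
      · exact Filter.Eventually.of_forall (fun y' h1 h2 => absurd ⟨h1, h2⟩ h)
    refine ⟨?_, ?_, ?_⟩
    · have h1 : ∀ᶠ y' in nhdsWithin y (Set.Iio y), ∀ l ∈ S, l ≠ i → l ≠ j →
          Fv a b c l s y' < Fv a b c i s y' := (hev i rfl).filter_mono nhdsWithin_le_nhds
      obtain ⟨y', h2, h3⟩ := (h1.and self_mem_nhdsWithin).exists
      refine ⟨y', fun l hl hli => ?_⟩
      by_cases hlj : l = j
      · subst hlj
        have h3 : y' < y := h3
        unfold Fv at *
        nlinarith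
      · exact h2 l hl hli hlj
    · have h1 : ∀ᶠ y' in nhdsWithin y (Set.Ioi y), ∀ l ∈ S, l ≠ i → l ≠ j →
          Fv a b c l s y' < Fv a b c j s y' := (hev j hy.symm).filter_mono nhdsWithin_le_nhds
      obtain ⟨y', h2, h3⟩ := (h1.and self_mem_nhdsWithin).exists
      refine ⟨y', fun l hl hlj => ?_⟩
      by_cases hli : l = i
      · subst hli
        have h3 : y < y' := h3
        unfold Fv at *
        nlinarith
      · exact h2 l hl hli hlj
    · rintro l hl ⟨y', hy'⟩ ⟨h1, h2⟩
      have hli : l ≠ i := by rintro rfl; exact lt_irrefl _ h1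
      have hlj : l ≠ j := by rintro rfl; exact lt_irrefl _ h2
      have g0 := hlt l hl hli hlj
      have g1 := hy' i hi hli.symm
      have g2 := hy' j hj hlj.symm
      unfold Fv at *
      rcases le_total y' y with h | h
      · nlinarith
      · nlinarith
  · rintro i hi t₁ t₂ t₃ h12 h23 ⟨y₁, h1⟩ ⟨y₃, h3⟩
    rcases eq_or_lt_of_le (h12.trans h23) with h13 | h13
    · have : t₂ = t₁ := by linarith
      exact ⟨y₁, by rw [this]; exact h1⟩
    · obtain ⟨θ, hθ⟩ : ∃ θ, θ = (t₂ - t₁) / (t₃ - t₁) := ⟨_, rfl⟩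
      have hd : 0 < t₃ - t₁ := by linarith
      have hθ0 : 0 ≤ θ := by rw [hθ]; apply div_nonneg <;> linarith
      have hθ1 : θ ≤ 1 := by rw [hθ, div_le_one hd]; linarith
      have ht2 : t₂ = (1 - θ) * t₁ + θ * t₃ := by rw [hθ]; field_simp; ring
      refine ⟨(1 - θ) * y₁ + θ * y₃, fun l hl hli => ?_⟩
      have g1 := h1 l hl hli
      have g3 := h3 l hl hli
      have e : ∀ m, Fv a b c m t₂ ((1 - θ) * y₁ + θ * y₃) =
          (1 - θ) * Fv a b c m t₁ y₁ + θ * Fv a b c m t₃ y₃ := by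
        intro m; unfold Fv; rw [ht2]; ring
      rw [e, e]
      rcases eq_or_lt_of_le hθ0 with h0 | h0
      · rw [← h0]; simpa using g1
      · have := mul_lt_mul_of_pos_left g3 h0
        have := mul_le_mul_of_nonneg_left g1.le (sub_nonneg.2 hθ1)
        linarith

lemma ES_card {ι : Type} (a b c : ι → ℝ) (S : Finset ι) (hb : Set.InjOn b S) :
    (ES a b c S).card ≤ 6 * S.card := by
  have hsub : ES a b c S ⊆ EZ a b c S ∪ (EZ a b c S).image Prod.swap := by
    rintro ⟨i, j⟩ hq
    simp only [ES, Finset.mem_filter, Finset.mem_product] at hq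
    obtain ⟨⟨hi, hj⟩, hij, s, y, hy, hlt⟩ := hq
    rw [Finset.mem_union]
    rcases lt_trichotomy (b i) (b j) with h | h | h
    · left
      simp only [EZ, Finset.mem_filter, Finset.mem_product]
      exact ⟨⟨hi, hj⟩, h, s, y, hy, hlt⟩
    · exact absurd (hb hi hj h) hij
    · right
      rw [Finset.mem_image]
      refine ⟨(j, i), ?_, rfl⟩
      simp only [EZ, Finset.mem_filter, Finset.mem_product]
      exact ⟨⟨hj, hi⟩, h, s, y, hy.symm, fun l hl h1 h2 => hy ▸ hlt l hl h2 h1⟩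
  have h1 := Finset.card_le_card hsub
  have h2 := Finset.card_union_le (EZ a b c S) ((EZ a b c S).image Prod.swap)
  have h3 : ((EZ a b c S).image Prod.swap).card ≤ (EZ a b c S).card := Finset.card_image_le
  have h4 := EZ_card a b c S hb
  omega

def TI {ι : Type} (a b c : ι → ℝ) (S : Finset ι) : Finset (ι × ι) :=
  (S ×ˢ S).filter (fun q => q.1 ≠ q.2 ∧ ∃ i, i ≠ q.1 ∧ i ≠ q.2 ∧
    ∃ s y, Fv a b c q.1 s y = Fv a b c q.2 s y ∧
    ∀ l ∈ S, l ≠ i → l ≠ q.1 → l ≠ q.2 → Fv a b c l s y < Fv a b c q.1 s y)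

lemma TI_card {ι : Type} (a b c : ι → ℝ) (S : Finset ι) (hb : Set.InjOn b S) :
    (TI a b c S).card ≤ 24 * S.card := by
  have := cs_lemma S (ES a b c) 6 (fun S' hS' => ES_card a b c S' (hb.mono (by exact_mod_cast hS')))
    1 le_rfl (TI a b c S) (by
      rintro ⟨j, k⟩ hq
      simp only [TI, Finset.mem_filter, Finset.mem_product] at hq
      obtain ⟨⟨hj, hk⟩, hjk, i, hij, hik, s, y, hy, hlt⟩ := hq
      refine ⟨hj, hk, hjk, {i}, by simp, by simpa using hij.symm, by simpa using hik.symm, ?_⟩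
      intro S' hS' hj' hk' hd
      simp only [ES, Finset.mem_filter, Finset.mem_product]
      refine ⟨⟨hj', hk'⟩, hjk, s, y, hy, fun l hl h1 h2 => hlt l (hS' hl) ?_ h1 h2⟩
      rintro rfl
      simp at hd
      exact hd hl)
  omega

def QQ {ι : Type} (a b c : ι → ℝ) (S : Finset ι) : Finset (ι × ι) :=
  (S ×ˢ S).filter (fun q => q.1 ≠ q.2 ∧ ∃ k ∈ S, k ≠ q.1 ∧ k ≠ q.2 ∧
    ∃ s y, Fv a b c q.2 s y = Fv a b c k s y ∧ Fv a b c q.2 s y < Fv a b c q.1 s y ∧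
    ∀ l ∈ S, l ≠ q.1 → l ≠ q.2 → l ≠ k → Fv a b c l s y < Fv a b c q.2 s y)

lemma no_middle {ι : Type} (a b c : ι → ℝ) (j k i : ι) (hjk : b j ≠ b k)
    (s₁ s₂ s₃ y₁ y₂ y₃ : ℝ) (h12 : s₁ ≤ s₂) (h23 : s₂ ≤ s₃)
    (e1 : Fv a b c j s₁ y₁ = Fv a b c k s₁ y₁)
    (e2 : Fv a b c j s₂ y₂ = Fv a b c k s₂ y₂)
    (e3 : Fv a b c j s₃ y₃ = Fv a b c k s₃ y₃)
    (g1 : Fv a b c i s₁ y₁ < Fv a b c j s₁ y₁)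
    (g2 : Fv a b c j s₂ y₂ < Fv a b c i s₂ y₂)
    (g3 : Fv a b c i s₃ y₃ < Fv a b c j s₃ y₃) : False := by
  have hd : b j - b k ≠ 0 := sub_ne_zero.2 hjk
  -- y = u s + v on the line
  obtain ⟨u, hu⟩ : ∃ u, u = -(a j - a k) / (b j - b k) := ⟨_, rfl⟩
  obtain ⟨v, hv⟩ : ∃ v, v = -(c j - c k) / (b j - b k) := ⟨_, rfl⟩
  have hy : ∀ s y, Fv a b c j s y = Fv a b c k s y → y = u * s + v := by
    intro s y h
    rw [hu, hv]
    field_simp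
    unfold Fv at h
    linarith
  have y1 := hy _ _ e1
  have y2 := hy _ _ e2
  have y3 := hy _ _ e3
  unfold Fv at g1 g2 g3
  subst y1 y2 y3
  obtain ⟨p, hp⟩ : ∃ p, p = a i - a j + (b i - b j) * u := ⟨_, rfl⟩
  obtain ⟨r, hr⟩ : ∃ r, r = (b i - b j) * v + c i - c j := ⟨_, rfl⟩
  have k1 : p * s₁ + r < 0 := by rw [hp, hr]; linarith
  have k2 : 0 < p * s₂ + r := by rw [hp, hr]; linarith
  have k3 : p * s₃ + r < 0 := by rw [hp, hr]; linarith
  rcases le_total 0 p with h | h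
  · nlinarith
  · nlinarith

lemma QQ_card {ι : Type} (a b c : ι → ℝ) (S : Finset ι) (hb : Set.InjOn b S) :
    (QQ a b c S).card ≤ 48 * S.card := by
  have hw : ∀ q : ι × ι, ∃ k, q ∈ QQ a b c S → k ∈ S ∧ k ≠ q.1 ∧ k ≠ q.2 ∧
    ∃ s y, Fv a b c q.2 s y = Fv a b c k s y ∧ Fv a b c q.2 s y < Fv a b c q.1 s y ∧
    ∀ l ∈ S, l ≠ q.1 → l ≠ q.2 → l ≠ k → Fv a b c l s y < Fv a b c q.2 s y := by
    intro q
    by_cases h : q ∈ QQ a b c S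
    · obtain ⟨k, hs⟩ := (Finset.mem_filter.1 h).2.2
      exact ⟨k, fun _ => hs⟩
    · exact ⟨q.1, fun h' => absurd h' h⟩
  choose w hw using hw
  have hmem : ∀ q ∈ QQ a b c S, q.1 ∈ S ∧ q.2 ∈ S ∧ q.1 ≠ q.2 := by
    intro q hq
    have h := Finset.mem_filter.1 hq
    have h' := Finset.mem_product.1 h.1
    exact ⟨h'.1, h'.2, h.2.1⟩
  have hmaps : ∀ q ∈ QQ a b c S, (q.2, w q) ∈ TI a b c S := by
    intro q hq
    obtain ⟨h1, h2, h12⟩ := hmem q hq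
    obtain ⟨hk, hk1, hk2, s, y, e, g, hl⟩ := hw q hq
    simp only [TI, Finset.mem_filter, Finset.mem_product]
    exact ⟨⟨h2, hk⟩, hk2.symm, q.1, h12, hk1.symm, s, y, e, hl⟩
  have hfib : ∀ z ∈ TI a b c S,
      ((QQ a b c S).filter (fun q => (q.2, w q) = z)).card ≤ 2 := by
    rintro ⟨j, k⟩ hz
    by_contra hcon
    push Not at hcon
    obtain ⟨q1, m1, q2, m2, q3, m3, n12, n13, n23⟩ := Finset.two_lt_card.1 hcon
    have hex : ∀ q ∈ ((QQ a b c S).filter (fun q => (q.2, w q) = (j, k))),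
        q.1 ∈ S ∧ q.1 ≠ j ∧ q.1 ≠ k ∧ q.2 = j ∧ k ∈ S ∧ j ∈ S ∧ k ≠ j ∧ ∃ s y,
        Fv a b c j s y = Fv a b c k s y ∧ Fv a b c j s y < Fv a b c q.1 s y ∧
        ∀ l ∈ S, l ≠ q.1 → l ≠ j → l ≠ k → Fv a b c l s y < Fv a b c j s y := by
      intro q hq
      obtain ⟨hq, he⟩ := Finset.mem_filter.1 hq
      simp only [Prod.mk.injEq] at he
      obtain ⟨h1, h2, h12⟩ := hmem q hq
      obtain ⟨hk, hk1, hk2, hs⟩ := hw q hq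
      rw [he.2] at hk hk1 hk2 hs
      rw [he.1] at h2 h12 hk2 hs
      exact ⟨h1, h12, hk1.symm, he.1, hk, h2, hk2, hs⟩
    obtain ⟨S1, j1, k1, f1, hkS, hjS, hkj, s1, y1, e1, g1, l1⟩ := hex _ m1
    obtain ⟨S2, j2, k2, f2, -, -, -, s2, y2, e2, g2, l2⟩ := hex _ m2
    obtain ⟨S3, j3, k3, f3, -, -, -, s3, y3, e3, g3, l3⟩ := hex _ m3
    have d12 : q1.1 ≠ q2.1 := fun h => n12 (Prod.ext h (f1.trans f2.symm))
    have d13 : q1.1 ≠ q3.1 := fun h => n13 (Prod.ext h (f1.trans f3.symm))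
    have d23 : q2.1 ≠ q3.1 := fun h => n23 (Prod.ext h (f2.trans f3.symm))
    have hbjk : b j ≠ b k := fun h => hkj (hb hkS hjS h.symm)
    have nm := no_middle a b c j k
    have a12 := l1 q2.1 S2 d12.symm j2 k2
    have a13 := l1 q3.1 S3 d13.symm j3 k3
    have a21 := l2 q1.1 S1 d12 j1 k1
    have a23 := l2 q3.1 S3 d23.symm j3 k3
    have a31 := l3 q1.1 S1 d13 j1 k1
    have a32 := l3 q2.1 S2 d23 j2 k2
    have c1 := fun (h : s2 ≤ s1) (h' : s1 ≤ s3) => nm q1.1 hbjk _ _ _ _ _ _ h h' e2 e1 e3 a21 g1 a31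
    have c1' := fun (h : s3 ≤ s1) (h' : s1 ≤ s2) => nm q1.1 hbjk _ _ _ _ _ _ h h' e3 e1 e2 a31 g1 a21
    have c2 := fun (h : s1 ≤ s2) (h' : s2 ≤ s3) => nm q2.1 hbjk _ _ _ _ _ _ h h' e1 e2 e3 a12 g2 a32
    have c2' := fun (h : s3 ≤ s2) (h' : s2 ≤ s1) => nm q2.1 hbjk _ _ _ _ _ _ h h' e3 e2 e1 a32 g2 a12
    have c3 := fun (h : s1 ≤ s3) (h' : s3 ≤ s2) => nm q3.1 hbjk _ _ _ _ _ _ h h' e1 e3 e2 a13 g3 a23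
    have c3' := fun (h : s2 ≤ s3) (h' : s3 ≤ s1) => nm q3.1 hbjk _ _ _ _ _ _ h h' e2 e3 e1 a23 g3 a13
    rcases le_total s1 s2 with h12 | h12 <;> rcases le_total s1 s3 with h13 | h13 <;>
      rcases le_total s2 s3 with h23 | h23 <;>
      first | exact c1 ‹_› ‹_› | exact c1' ‹_› ‹_› | exact c2 ‹_› ‹_› | exact c2' ‹_› ‹_› | exact c3 ‹_› ‹_› | exact c3' ‹_› ‹_›
  have h1 := Finset.card_le_mul_card_image_of_maps_to hmaps 2 hfib
  have h2 := TI_card a b c S hb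
  omega

lemma sign_lemma (m r y0 ys yl : ℝ) (hz : m * yl + r = 0) (hs : m * ys + r ≠ 0)
    (hd : |ys - y0| ≤ |yl - y0|) :
    (0 < m * y0 + r → 0 < m * ys + r) ∧ (m * y0 + r < 0 → m * ys + r < 0) := by
  have hr : r = - (m * yl) := by linarith
  subst hr
  have e1 : m * y0 + -(m * yl) = - (m * (yl - y0)) := by ring
  have e2 : m * ys + -(m * yl) = m * (ys - y0) - m * (yl - y0) := by ring
  have hd' : |m * (ys - y0)| ≤ |m * (yl - y0)| := by
    rw [abs_mul, abs_mul]; exact mul_le_mul_of_nonneg_left hd (abs_nonneg _)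
  rw [e2] at hs ⊢
  rw [e1]
  generalize m * (ys - y0) = u at *
  generalize m * (yl - y0) = v at *
  constructor
  · intro h
    apply lt_of_le_of_ne _ hs.symm
    rw [abs_of_neg (by linarith : v < 0)] at hd'
    have := (abs_le.1 hd').1
    linarith
  · intro h
    apply lt_of_le_of_ne _ hs
    rw [abs_of_pos (by linarith : 0 < v)] at hd'
    have := (abs_le.1 hd').2
    linarith

lemma step_lemma {ι : Type} (a b c : ι → ℝ) (S : Finset ι) (hb : Set.InjOn b S) (s y : ℝ)
    (hgen : ∀ y, ∀ j ∈ S, ∀ k ∈ S, ∀ l ∈ S, j ≠ k → j ≠ l → k ≠ l →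
      Fv a b c k s y = Fv a b c j s y → Fv a b c l s y ≠ Fv a b c j s y)
    (i j : ι) (hi : i ∈ S) (hj : j ∈ S) (hij : i ≠ j)
    (h1 : Fv a b c j s y < Fv a b c i s y)
    (h2 : ∀ l ∈ S, l ≠ i → l ≠ j → Fv a b c l s y < Fv a b c j s y) :
    (i, j) ∈ ES a b c S ∪ QQ a b c S := by
  have hd : ∀ l ∈ S.erase j, b l - b j ≠ 0 := by
    intro l hl h
    rw [Finset.mem_erase] at hl
    exact hl.1 (hb hl.2 hj (sub_eq_zero.1 h))
  let Y : ι → ℝ := fun l => -((a l - a j) * s + (c l - c j)) / (b l - b j)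
  have hY : ∀ l ∈ S.erase j, (b l - b j) * Y l + ((a l - a j) * s + (c l - c j)) = 0 := by
    intro l hl
    have := hd l hl
    simp only [Y]
    field_simp
    ring
  have hF : ∀ l z, (b l - b j) * z + ((a l - a j) * s + (c l - c j)) =
      Fv a b c l s z - Fv a b c j s z := by
    intro l z; unfold Fv; ring
  obtain ⟨k, hk, hmin⟩ := (S.erase j).exists_min_image (fun l => |Y l - y|)
    ⟨i, Finset.mem_erase.2 ⟨hij, hi⟩⟩
  obtain ⟨hkj, hkS⟩ := Finset.mem_erase.1 hk
  have hkY : Fv a b c k s (Y k) = Fv a b c j s (Y k) := by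
    have := hY k hk
    rw [hF] at this
    linarith
  have hsign : ∀ l ∈ S, l ≠ j → l ≠ k →
      (Fv a b c j s y < Fv a b c l s y → Fv a b c j s (Y k) < Fv a b c l s (Y k)) ∧
      (Fv a b c l s y < Fv a b c j s y → Fv a b c l s (Y k) < Fv a b c j s (Y k)) := by
    intro l hl hlj hlk
    have hl' : l ∈ S.erase j := Finset.mem_erase.2 ⟨hlj, hl⟩
    have := sign_lemma _ _ y (Y k) (Y l) (hY l hl') (by
      rw [hF]
      exact sub_ne_zero.2 (hgen _ j hj k hkS l hl hkj.symm hlj.symm hlk.symm hkY)) (hmin l hl')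
    rw [hF, hF] at this
    simpa only [sub_pos, sub_neg] using this
  rw [Finset.mem_union]
  by_cases hki : k = i
  · left
    subst hki
    simp only [ES, Finset.mem_filter, Finset.mem_product]
    refine ⟨⟨hi, hj⟩, hij, s, Y k, hkY, fun l hl h3 h4 => ?_⟩
    rw [hkY]
    exact (hsign l hl h4 h3).2 (h2 l hl h3 h4)
  · right
    simp only [QQ, Finset.mem_filter, Finset.mem_product]
    refine ⟨⟨hi, hj⟩, hij, k, hkS, hki, hkj, s, Y k, hkY.symm, ?_, fun l hl h3 h4 h5 => ?_⟩
    · exact (hsign i hi hij (Ne.symm hki)).1 h1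
    · exact (hsign l hl h4 h5).2 (h2 l hl h3 h4)

lemma order_two_generic {ι : Type} (a b c : ι → ℝ) (S : Finset ι) (hb : Set.InjOn b S)
    (N : Finset (ι × ι)) (w : ι × ι → ℝ × ℝ)
    (hgen : ∀ q ∈ N, ∀ y, ∀ j ∈ S, ∀ k ∈ S, ∀ l ∈ S, j ≠ k → j ≠ l → k ≠ l →
      Fv a b c k (w q).1 y = Fv a b c j (w q).1 y → Fv a b c l (w q).1 y ≠ Fv a b c j (w q).1 y)
    (hN : ∀ q ∈ N, q.1 ∈ S ∧ q.2 ∈ S ∧ q.1 ≠ q.2 ∧ ∀ l ∈ S, l ≠ q.1 → l ≠ q.2 →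
      Fv a b c l (w q).1 (w q).2 < Fv a b c q.1 (w q).1 (w q).2 ∧
      Fv a b c l (w q).1 (w q).2 < Fv a b c q.2 (w q).1 (w q).2) :
    N.card ≤ 108 * S.card := by
  have hsub : N ⊆ (ES a b c S ∪ QQ a b c S) ∪ (ES a b c S ∪ QQ a b c S).image Prod.swap := by
    rintro ⟨i, j⟩ hq
    obtain ⟨hi, hj, hij, hl⟩ := hN _ hq
    have hg := hgen _ hq
    generalize w (i, j) = p at *
    obtain ⟨s, y⟩ := p
    simp only at hi hj hij hl hg
    rw [Finset.mem_union]
    rcases lt_trichotomy (Fv a b c i s y) (Fv a b c j s y) with h | h | h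
    · right
      rw [Finset.mem_image]
      exact ⟨(j, i), step_lemma a b c S hb s y hg j i hj hi hij.symm h
        (fun l hl' h1 h2 => (hl l hl' h2 h1).1), rfl⟩
    · left
      rw [Finset.mem_union]
      left
      simp only [ES, Finset.mem_filter, Finset.mem_product]
      exact ⟨⟨hi, hj⟩, hij, s, y, h, fun l hl' h1 h2 => (hl l hl' h1 h2).1⟩
    · left
      exact step_lemma a b c S hb s y hg i j hi hj hij h (fun l hl' h1 h2 => (hl l hl' h1 h2).2)
  have h1 := Finset.card_le_card hsub
  have h2 := Finset.card_union_le (ES a b c S ∪ QQ a b c S) ((ES a b c S ∪ QQ a b c S).image Prod.swap)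
  have h3 : ((ES a b c S ∪ QQ a b c S).image Prod.swap).card ≤ _ := Finset.card_image_le
  have h4 := Finset.card_union_le (ES a b c S) (QQ a b c S)
  have h5 := ES_card a b c S hb
  have h6 := QQ_card a b c S hb
  omega

lemma ev_ne (p r : ℝ) (hr : r ≠ 0) : ∀ᶠ e in nhdsWithin (0 : ℝ) {0}ᶜ, p + e * r ≠ 0 := by
  by_cases hp : p = 0
  · filter_upwards [self_mem_nhdsWithin] with e he
    rw [hp, zero_add]
    exact mul_ne_zero he hr
  · have hc : ContinuousAt (fun e : ℝ => p + e * r) 0 := by fun_prop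
    exact (hc.eventually_ne (by simpa using hp)).filter_mono nhdsWithin_le_nhds

lemma order_two {ι : Type} (a b c : ι → ℝ) (S : Finset ι)
    (N : Finset (ι × ι)) 
    (hN : ∀ q ∈ N, q.1 ∈ S ∧ q.2 ∈ S ∧ q.1 ≠ q.2 ∧ ∃ s y, ∀ l ∈ S, l ≠ q.1 → l ≠ q.2 →
      Fv a b c l s y < Fv a b c q.1 s y ∧ Fv a b c l s y < Fv a b c q.2 s y) :
    N.card ≤ 108 * S.card := by
  have hw : ∀ q : ι × ι, ∃ z : ℝ × ℝ, q ∈ N → ∀ l ∈ S, l ≠ q.1 → l ≠ q.2 →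
      Fv a b c l z.1 z.2 < Fv a b c q.1 z.1 z.2 ∧ Fv a b c l z.1 z.2 < Fv a b c q.2 z.1 z.2 := by
    intro q
    by_cases h : q ∈ N
    · obtain ⟨-, -, -, s, y, hs⟩ := hN q h
      exact ⟨(s, y), fun _ => hs⟩
    · exact ⟨0, fun h' => absurd h' h⟩
  choose w hw using hw
  obtain ⟨m, hm⟩ : ∃ m : ι → ℝ, Set.InjOn m S := by
    refine ⟨fun i => if h : i ∈ S then (S.equivFin ⟨i, h⟩ : ℕ) else 0, ?_⟩
    intro i hi j hj hij
    have hi' : i ∈ S := hi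
    have hj' : j ∈ S := hj
    simp only [hi', hj', dif_pos, Nat.cast_inj, Fin.val_inj, EmbeddingLike.apply_eq_iff_eq,
      Subtype.mk.injEq] at hij
    exact hij
  -- general perturbation
  have pert : ∀ (a : ι → ℝ) (b c b' c' : ι → ℝ), 
      (∀ q ∈ N, ∀ l ∈ S, l ≠ q.1 → l ≠ q.2 →
      Fv a b c l (w q).1 (w q).2 < Fv a b c q.1 (w q).1 (w q).2 ∧
      Fv a b c l (w q).1 (w q).2 < Fv a b c q.2 (w q).1 (w q).2) →
      ∀ᶠ e in nhdsWithin (0 : ℝ) {0}ᶜ, (∀ q ∈ N, ∀ l ∈ S, l ≠ q.1 → l ≠ q.2 →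
      Fv a (fun i => b i + e * b' i) (fun i => c i + e * c' i) l (w q).1 (w q).2 <
        Fv a (fun i => b i + e * b' i) (fun i => c i + e * c' i) q.1 (w q).1 (w q).2 ∧
      Fv a (fun i => b i + e * b' i) (fun i => c i + e * c' i) l (w q).1 (w q).2 <
        Fv a (fun i => b i + e * b' i) (fun i => c i + e * c' i) q.2 (w q).1 (w q).2) := by
    intro a b c b' c' h
    apply Filter.Eventually.filter_mono nhdsWithin_le_nhds
    rw [Finset.eventually_all]
    intro q hq
    rw [Finset.eventually_all]
    intro l hl
    by_cases hh : l ≠ q.1 ∧ l ≠ q.2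
    · have hcont : ∀ l, ContinuousAt (fun e : ℝ => Fv a (fun i => b i + e * b' i)
          (fun i => c i + e * c' i) l (w q).1 (w q).2) 0 := by
        intro l; unfold Fv; fun_prop
      have h0 := h q hq l hl hh.1 hh.2
      filter_upwards [(hcont l).eventually_lt (hcont q.1) (by simpa using h0.1),
        (hcont l).eventually_lt (hcont q.2) (by simpa using h0.2)] with e h1 h2 _ _
      exact ⟨h1, h2⟩
    · exact Filter.Eventually.of_forall (fun e h1 h2 => absurd ⟨h1, h2⟩ hh)
  have hinj : ∀ᶠ e in nhdsWithin (0 : ℝ) {0}ᶜ, ∀ i ∈ S, ∀ j ∈ S, i ≠ j →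
      b i + e * m i ≠ b j + e * m j := by
    rw [Finset.eventually_all]
    intro i hi
    rw [Finset.eventually_all]
    intro j hj
    by_cases hij : i = j
    · exact Filter.Eventually.of_forall (fun e h => absurd hij h)
    · filter_upwards [ev_ne (b i - b j) (m i - m j) (sub_ne_zero.2 (fun h => hij (hm hi hj h)))]
        with e he _ h
      apply he
      linarith
  obtain ⟨e, he1, he2⟩ := ((pert a b c m (fun _ => 0) hw).and hinj).exists
  simp only [mul_zero, add_zero] at he1
  generalize hB : (fun i => b i + e * m i) = B at he1
  have hBinj : Set.InjOn B S := by
    intro i hi j hj hij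
    by_contra hne
    subst hB
    exact he2 i hi j hj hne hij
  have hgen : ∀ᶠ e in nhdsWithin (0 : ℝ) {0}ᶜ, ∀ q ∈ N, ∀ j ∈ S, ∀ k ∈ S, ∀ l ∈ S, 
      j ≠ k → j ≠ l → k ≠ l → ∀ y, 
      Fv a B (fun i => c i + e * (B i)^2) k (w q).1 y = Fv a B (fun i => c i + e * (B i)^2) j (w q).1 y →
      Fv a B (fun i => c i + e * (B i)^2) l (w q).1 y ≠ Fv a B (fun i => c i + e * (B i)^2) j (w q).1 y := by
    rw [Finset.eventually_all]
    intro q hq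
    rw [Finset.eventually_all]
    intro j hj
    rw [Finset.eventually_all]
    intro k hk
    rw [Finset.eventually_all]
    intro l hl
    by_cases hh : j ≠ k ∧ j ≠ l ∧ k ≠ l
    · obtain ⟨h1, h2, h3⟩ := hh
      generalize (w q).1 = s
      have n1 : B j - B k ≠ 0 := sub_ne_zero.2 (fun h => h1 (hBinj hj hk h))
      have n2 : B j - B l ≠ 0 := sub_ne_zero.2 (fun h => h2 (hBinj hj hl h))
      have n3 : B k - B l ≠ 0 := sub_ne_zero.2 (fun h => h3 (hBinj hk hl h))
      filter_upwards [ev_ne (((a j * s + c j) - (a k * s + c k)) * (B k - B l) -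
        ((a k * s + c k) - (a l * s + c l)) * (B j - B k))
        ((B j - B k) * (B j - B l) * (B k - B l)) (mul_ne_zero (mul_ne_zero n1 n2) n3)]
        with e he _ _ _ y e1 e2
      apply he
      unfold Fv at e1 e2
      linear_combination (-(B k - B l) - (B j - B k)) * e1 + (B j - B k) * e2
    · exact Filter.Eventually.of_forall (fun e h1 h2 h3 => absurd ⟨h1, h2, h3⟩ hh)
  obtain ⟨η, h1, h2⟩ := ((pert a B c (fun _ => 0) (fun i => (B i)^2) he1).and hgen).exists
  simp only [mul_zero, add_zero] at h1
  apply order_two_generic a B (fun i => c i + η * (B i)^2) S hBinj N w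
  · intro q hq y j hj k hk l hl n1 n2 n3
    exact h2 q hq j hj k hk l hl n1 n2 n3 y
  · intro q hq
    obtain ⟨g1, g2, g3, -⟩ := hN q hq
    exact ⟨g1, g2, g3, h1 q hq⟩

lemma mem_disk_iff (c p : Plane) (r : ℝ) (hr : 0 < r) :
    p ∈ Metric.closedBall c r ↔ (p 0 - c 0) ^ 2 + (p 1 - c 1) ^ 2 ≤ r ^ 2 := by
  rw [Metric.mem_closedBall, EuclideanSpace.dist_eq, Real.sqrt_le_left hr.le, Fin.sum_univ_two,
    Real.dist_eq, Real.dist_eq, sq_abs, sq_abs]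

/-- There is a universal constant `C > 0` such that for any
two disjoint finite sets `D₁, D₂` of distinct disks with `|D₁| + |D₂| = n` and
any integer `k ≥ 1`, the number of pairs `(d₁, d₂) ∈ D₁ × D₂` admitting a
point `p ∈ d₁ ∩ d₂` of depth at most `k` in `D₁ ∪ D₂` is at most `C·n·k`. -/
theorem bipartite_shallow_edges_count :
    ∃ C : ℝ, 0 < C ∧
      ∀ (D₁ D₂ : Finset (Set Plane)), (∀ d ∈ D₁ ∪ D₂, IsDisk d) →
        Disjoint D₁ D₂ →
      ∀ k : ℕ, 1 ≤ k →
      (({q : Set Plane × Set Plane | q.1 ∈ D₁ ∧ q.2 ∈ D₂ ∧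
          ∃ p : Plane, p ∈ q.1 ∩ q.2 ∧ diskDepth (D₁ ∪ D₂) p ≤ k}).ncard : ℝ)
        ≤ C * (D₁.card + D₂.card) * k := by
  refine ⟨432, by norm_num, ?_⟩
  intro D₁ D₂ hD hdisj k hk
  have hch : ∀ d : Set Plane, ∃ z : Plane × ℝ, d ∈ D₁ ∪ D₂ → 0 < z.2 ∧ d = Metric.closedBall z.1 z.2 := by
    intro d
    by_cases h : d ∈ D₁ ∪ D₂
    · obtain ⟨c, r, hr, he⟩ := hD d h
      exact ⟨(c, r), fun _ => ⟨hr, he⟩⟩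
    · exact ⟨(0, 0), fun h' => absurd h' h⟩
  choose z hz using hch
  let fa : Set Plane → ℝ := fun d => 2 * (z d).1 0
  let fb : Set Plane → ℝ := fun d => 2 * (z d).1 1
  let fc : Set Plane → ℝ := fun d => (z d).2 ^ 2 - (z d).1 0 ^ 2 - (z d).1 1 ^ 2
  have hmem : ∀ d ∈ D₁ ∪ D₂, ∀ p : Plane, p ∈ d ↔ p 0 ^ 2 + p 1 ^ 2 ≤ Fv fa fb fc d (p 0) (p 1) := by
    intro d hd p
    obtain ⟨h1, h2⟩ := hz d hd
    have h3 := mem_disk_iff (z d).1 p (z d).2 h1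
    rw [← h2] at h3
    rw [h3]
    simp only [Fv, fa, fb, fc]
    constructor <;> intro h <;> nlinarith
  let E : Finset (Set Plane) → Finset (Set Plane × Set Plane) := fun S =>
    (S ×ˢ S).filter (fun q => q.1 ≠ q.2 ∧ ∃ s y, ∀ l ∈ S, l ≠ q.1 → l ≠ q.2 →
      Fv fa fb fc l s y < Fv fa fb fc q.1 s y ∧ Fv fa fb fc l s y < Fv fa fb fc q.2 s y)
  let N : Finset (Set Plane × Set Plane) := (D₁ ×ˢ D₂).filter (fun q =>
    ∃ p : Plane, p ∈ q.1 ∩ q.2 ∧ diskDepth (D₁ ∪ D₂) p ≤ k)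
  have hNeq : {q : Set Plane × Set Plane | q.1 ∈ D₁ ∧ q.2 ∈ D₂ ∧
          ∃ p : Plane, p ∈ q.1 ∩ q.2 ∧ diskDepth (D₁ ∪ D₂) p ≤ k} = (N : Set (Set Plane × Set Plane)) := by
    ext q
    simp [N, and_assoc]
  rw [hNeq, Set.ncard_coe_finset]
  have hmain : N.card ≤ 4 * 108 * k * (D₁ ∪ D₂).card := by
    apply cs_lemma (D₁ ∪ D₂) E 108 _ k hk N
    · rintro ⟨d, d'⟩ hq
      simp only [N, Finset.mem_filter, Finset.mem_product] at hq
      obtain ⟨⟨h1, h2⟩, p, ⟨hp1, hp2⟩, hdep⟩ := hq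
      have hd : d ∈ D₁ ∪ D₂ := Finset.mem_union_left _ h1
      have hd' : d' ∈ D₁ ∪ D₂ := Finset.mem_union_right _ h2
      have hne : d ≠ d' := by
        rintro rfl
        exact Finset.disjoint_left.1 hdisj h1 h2
      have hdc : ((D₁ ∪ D₂).filter (fun x => p ∈ x)).card ≤ k := by
        have : {x : Set Plane | x ∈ D₁ ∪ D₂ ∧ p ∈ x} =
            (((D₁ ∪ D₂).filter (fun x => p ∈ x) : Finset (Set Plane)) : Set (Set Plane)) := by
          ext x; simp
        unfold diskDepth at hdep
        rwa [this, Set.ncard_coe_finset] at hdep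
      refine ⟨hd, hd', hne, (((D₁ ∪ D₂).filter (fun x => p ∈ x)).erase d).erase d', ?_, by simp,
        by simp, ?_⟩
      · exact (Finset.card_le_card ((Finset.erase_subset _ _).trans (Finset.erase_subset _ _))).trans hdc
      · intro S hS hdS hdS' hdis
        simp only [E, Finset.mem_filter, Finset.mem_product]
        refine ⟨⟨hdS, hdS'⟩, hne, p 0, p 1, fun l hl n1 n2 => ?_⟩
        have hnp : p ∉ l := by
          intro hpl
          refine Finset.disjoint_left.1 hdis hl ?_
          simp only [Finset.mem_erase, Finset.mem_filter]
          exact ⟨n2, n1, hS hl, hpl⟩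
        have g := mt (hmem l (hS hl) p).2 hnp
        rw [not_le] at g
        exact ⟨g.trans_le ((hmem d hd p).1 hp1), g.trans_le ((hmem d' hd' p).1 hp2)⟩
    · intro S hS
      apply order_two fa fb fc S
      rintro q hq
      simp only [E, Finset.mem_filter, Finset.mem_product] at hq
      exact ⟨hq.1.1, hq.1.2, hq.2.1, hq.2.2⟩
  rw [Finset.card_union_of_disjoint hdisj] at hmain
  have : (N.card : ℝ) ≤ 4 * 108 * k * (D₁.card + D₂.card) := by exact_mod_cast hmain
  linarith
end
end

section
/- Let D be a finite set of distinct disks in the plane, let k ≥ 2 be an integer, and let p ∈ ℝ² be a point with depth_D(p) ≤ k that lies in d₁ ∩ d₂ for two distinct disks d₁, d₂ ∈ D. Let R ⊆ D be a random sample obtained by including each disk of D independently with probability 1/k. Then the probability that d₁ ∈ R, d₂ ∈ R, and depth_R(p) ≤ 2 is at least 1/(10k²). -/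
open Metric Set
open scoped Classical

noncomputable section

theorem aux_pow_bound (k : ℕ) (hk : 2 ≤ k) :
    (1 : ℝ) / 10 ≤ (1 - 1 / (k : ℝ)) ^ (k - 2) := by
  obtain ⟨n, rfl⟩ : ∃ n, k = n + 2 := ⟨k - 2, by omega⟩
  have hn : (0 : ℝ) ≤ n := Nat.cast_nonneg n
  have e : (1 - 1 / ((n + 2 : ℕ) : ℝ)) = (1 + 1 / ((n : ℝ) + 1))⁻¹ := by
    push_cast
    field_simp
    ring
  have h1 : (1 + 1 / ((n : ℝ) + 1)) ^ n ≤ 10 := by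
    have h2 : 1 + 1 / ((n : ℝ) + 1) ≤ Real.exp (1 / ((n : ℝ) + 1)) := by
      have := Real.add_one_le_exp (1 / ((n : ℝ) + 1))
      linarith
    calc (1 + 1 / ((n : ℝ) + 1)) ^ n ≤ (Real.exp (1 / ((n : ℝ) + 1))) ^ n := by gcongr
      _ = Real.exp (n * (1 / ((n : ℝ) + 1))) := by rw [← Real.exp_nat_mul]
      _ ≤ Real.exp 1 := by
        apply Real.exp_le_exp.mpr
        rw [mul_one_div, div_le_one (by positivity)]
        linarith
      _ ≤ 10 := by have := Real.exp_one_lt_d9; linarith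
  rw [e, Nat.add_sub_cancel, inv_pow, one_div]
  exact inv_anti₀ (by positivity) h1

/-- Let `D` be a finite set of distinct disks, `k ≥ 2` an
integer, and `p` a point of depth at most `k` lying in `d₁ ∩ d₂` for distinct
`d₁, d₂ ∈ D`.  If `R ⊆ D` is a random sample including each disk independently
with probability `1/k`, then the probability that `d₁ ∈ R`, `d₂ ∈ R` and
`depth_R(p) ≤ 2` is at least `1/(10k²)`.  (The probability is written as a sum
of the binomial weights `(1/k)^{|R|}(1−1/k)^{|D|−|R|}` over the subsets `R` in
the event.) -/
theorem sample_keeps_shallow_edge (D : Finset (Set Plane))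
    (hD : ∀ d ∈ D, IsDisk d) (k : ℕ) (hk : 2 ≤ k)
    (p : Plane) (hdepth : diskDepth D p ≤ k)
    (d₁ d₂ : Set Plane) (h₁ : d₁ ∈ D) (h₂ : d₂ ∈ D) (hne : d₁ ≠ d₂)
    (hp₁ : p ∈ d₁) (hp₂ : p ∈ d₂) :
    (1 : ℝ) / (10 * (k : ℝ) ^ 2) ≤
      ∑ R ∈ D.powerset,
        (if d₁ ∈ R ∧ d₂ ∈ R ∧ diskDepth R p ≤ 2 then
          ((1 : ℝ) / k) ^ R.card * (1 - 1 / (k : ℝ)) ^ (D.card - R.card)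
        else 0) := by
  have hk0 : (2 : ℝ) ≤ k := by exact_mod_cast hk
  have hq0 : (0 : ℝ) ≤ 1 / k := by positivity
  have hq1 : (0 : ℝ) ≤ 1 - 1 / (k : ℝ) := by
    rw [sub_nonneg, div_le_one (by linarith)]
    linarith
  have hq2 : 1 - 1 / (k : ℝ) ≤ 1 := by linarith
  set q : ℝ := 1 / (k : ℝ) with hq
  set A := D.filter (fun d => p ∈ d) with hA
  set B := D.filter (fun d => p ∉ d) with hB
  have hAk : A.card ≤ k := by
    have : diskDepth D p = A.card := by
      unfold diskDepth
      rw [← Set.ncard_coe_finset]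
      congr 1
      ext d
      simp [hA]
    omega
  have hAB : A.card + B.card = D.card := Finset.card_filter_add_card_filter_not _
  have hpair : ({d₁, d₂} : Finset (Set Plane)) ⊆ A := by
    intro d hd
    simp only [Finset.mem_insert, Finset.mem_singleton] at hd
    rcases hd with rfl | rfl <;> simp [hA, *]
  have hpc : ({d₁, d₂} : Finset (Set Plane)).card = 2 := Finset.card_pair hne
  have hA2 : 2 ≤ A.card := hpc ▸ Finset.card_le_card hpair
  have hdisj : ∀ S ∈ B.powerset, Disjoint ({d₁, d₂} : Finset (Set Plane)) S := by
    intro S hS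
    rw [Finset.mem_powerset] at hS
    rw [Finset.disjoint_left]
    intro d hd hdS
    have h3 := hpair hd
    have h4 := hS hdS
    simp only [hA, hB, Finset.mem_filter] at h3 h4
    exact h4.2 h3.2
  have hinj : Set.InjOn (fun S : Finset (Set Plane) => ({d₁, d₂} : Finset (Set Plane)) ∪ S)
      (B.powerset : Set (Finset (Set Plane))) := by
    intro S hS T hT h
    have h5 := hdisj S hS
    have h6 := hdisj T hT
    have h7 := congrArg (fun X => X \ ({d₁, d₂} : Finset (Set Plane))) h
    simp only [Finset.union_sdiff_cancel_left h5, Finset.union_sdiff_cancel_left h6] at h7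
    exact h7
  have hsub : B.powerset.image (fun S => ({d₁, d₂} : Finset (Set Plane)) ∪ S) ⊆ D.powerset := by
    intro R hR
    obtain ⟨S, hS, rfl⟩ := Finset.mem_image.mp hR
    rw [Finset.mem_powerset] at hS ⊢
    exact Finset.union_subset (hpair.trans (Finset.filter_subset _ _))
      (hS.trans (Finset.filter_subset _ _))
  have hmain : q ^ 2 * (1 - q) ^ (A.card - 2) = ∑ S ∈ B.powerset,
      q ^ 2 * (1 - q) ^ (A.card - 2) * (q ^ S.card * (1 - q) ^ (B.card - S.card)) := by
    rw [← Finset.mul_sum, Finset.sum_pow_mul_eq_add_pow]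
    simp
  calc (1 : ℝ) / (10 * (k : ℝ) ^ 2) = q ^ 2 * (1 / 10) := by
        rw [hq]; field_simp
    _ ≤ q ^ 2 * (1 - q) ^ (k - 2) := by
        have := aux_pow_bound k hk
        gcongr
    _ ≤ q ^ 2 * (1 - q) ^ (A.card - 2) := by
        apply mul_le_mul_of_nonneg_left _ (by positivity)
        exact pow_le_pow_of_le_one hq1 hq2 (by omega)
    _ = _ := hmain
    _ = ∑ S ∈ B.powerset, (if d₁ ∈ {d₁, d₂} ∪ S ∧ d₂ ∈ {d₁, d₂} ∪ S ∧
          diskDepth ({d₁, d₂} ∪ S) p ≤ 2 then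
          q ^ ({d₁, d₂} ∪ S).card * (1 - q) ^ (D.card - ({d₁, d₂} ∪ S).card) else 0) := by
        apply Finset.sum_congr rfl
        intro S hS
        have hc : (({d₁, d₂} : Finset (Set Plane)) ∪ S).card = 2 + S.card := by
          rw [Finset.card_union_of_disjoint (hdisj S hS), hpc]
        have hS' := Finset.mem_powerset.mp hS
        have hSc := Finset.card_le_card hS'
        have hd : diskDepth ({d₁, d₂} ∪ S) p ≤ 2 := by
          unfold diskDepth
          rw [← hpc, ← Set.ncard_coe_finset]
          apply Set.ncard_le_ncard _ (Finset.finite_toSet _)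
          rintro d ⟨hd1, hd2⟩
          rcases Finset.mem_union.mp hd1 with h | h
          · exact h
          · exact absurd hd2 (Finset.mem_filter.mp (hS' h)).2
        rw [if_pos ⟨by simp, by simp, hd⟩, hc,
          show D.card - (2 + S.card) = (A.card - 2) + (B.card - S.card) by omega,
          pow_add, pow_add]
        ring
    _ = ∑ R ∈ B.powerset.image (fun S => ({d₁, d₂} : Finset (Set Plane)) ∪ S),
          (if d₁ ∈ R ∧ d₂ ∈ R ∧ diskDepth R p ≤ 2 then
          q ^ R.card * (1 - q) ^ (D.card - R.card) else 0) := by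
        rw [Finset.sum_image hinj]
    _ ≤ _ := by
        apply Finset.sum_le_sum_of_subset_of_nonneg hsub
        intro R _ _
        split_ifs
        · positivity
        · exact le_rfl
end
end
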